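/- arXiv:1611.03189 — 2 statements merged into one kernel-verified Lean document; each statement's English description precedes it below -/
import Mathlib

section
/- Let A be an n×n real symmetric positive definite matrix with orthonormal eigenbasis e₁,…,e_n and corresponding eigenvalues λ₁ ≤ λ₂ ≤ … ≤ λ_n, and write λ_max := λ_n. Let A_H be an n×n real symmetric matrix with ‖(A − A_H)eᵢ‖ ≤ εᵢ·λ_max for each 1 ≤ i ≤ n, where εᵢ ≥ 0. Assume δ := (2/√3)·Σ_{i=1}^{n−1} εᵢ·λ_max/λᵢ + ε_n·λ_max/λ_n < 1. Then for every v ∈ ℝⁿ, (1 − δ)·vᵀAv ≤ vᵀA_H v ≤ (1 + δ)·vᵀAv; consequently every eigenvalue ρ of A_H⁻¹A satisfies 1/(1+δ) ≤ ρ ≤ 1/(1−δ) and κ(A_H⁻¹A) ≤ (1+δ)/(1−δ). -/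
open Matrix

/-- Euclidean norm on ℝⁿ. -/
noncomputable def enorm {n : ℕ} (v : Fin n → ℝ) : ℝ := Real.sqrt (∑ i, v i ^ 2)

/-!
Expand `v = ∑ cᵢ eᵢ` and put `T = A - A_H`. Since `T` is symmetric, each off-diagonal pair can be
charged to its smaller index, so that `⟪T v, v⟫ = ∑ᵢ cᵢ ⟪T eᵢ, wᵢ⟫` with
`wᵢ = cᵢ eᵢ + 2 ∑_{j > i} cⱼ eⱼ`. By Cauchy–Schwarz the `i`-th term is at most `|cᵢ| ‖wᵢ‖ ‖T eᵢ‖`,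
and with `Y = ∑_{j > i} cⱼ²` one has `|cᵢ| ‖wᵢ‖ = |cᵢ| √(cᵢ² + 4 Y) ≤ (2/√3) (cᵢ² + Y)`, where the
constant improves to `1` at the last index because there `Y = 0`. Finally
`λᵢ (cᵢ² + Y) ≤ ∑ λⱼ cⱼ² = ⟪A v, v⟫`, as the eigenvalues are sorted. The spectral claims follow
because an eigenvalue of `A_H⁻¹ A` with eigenvector `v` is the quotient `vᵀ A v / vᵀ A_H v`.
-/

open scoped RealInnerProductSpace

section DoubledTail

theorem sum_sum_eq_sum_add_two_nsmul_sum_Ioi {ι M : Type*} [Fintype ι] [LinearOrder ι]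
    [LocallyFiniteOrderTop ι] [LocallyFiniteOrderBot ι] [AddCommMonoid M] {f : ι → ι → M}
    (hf : ∀ i j, f i j = f j i) :
    ∑ i, ∑ j, f i j = ∑ i, (f i i + 2 • ∑ j ∈ Finset.Ioi i, f i j) := by
  have off_diagonal : ∑ i, 2 • ∑ j ∈ Finset.Ioi i, f i j = ∑ i, ∑ j ∈ {i}ᶜ, f i j := by
    simp only [two_nsmul, ← Finset.sum_add_distrib]
    calc ∑ i, ∑ j ∈ Finset.Ioi i, (f i j + f i j)
        = ∑ i, ∑ j ∈ Finset.Ioi i, (f j i + f i j) :=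
          Finset.sum_congr rfl fun i _ => Finset.sum_congr rfl fun j _ => by rw [hf j i]
      _ = ∑ i, ∑ j ∈ {i}ᶜ, f j i := Finset.sum_sum_Ioi_add_eq_sum_sum_off_diag f
      _ = ∑ i, ∑ j ∈ {i}ᶜ, f i j :=
          Finset.sum_congr rfl fun i _ => Finset.sum_congr rfl fun j _ => hf j i
  rw [Finset.sum_add_distrib, off_diagonal, ← Finset.sum_add_distrib]
  exact Finset.sum_congr rfl fun i _ => Fintype.sum_eq_add_sum_compl i (f i)

variable {ι V : Type*} [LinearOrder ι] [LocallyFiniteOrderTop ι]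
  [NormedAddCommGroup V] [InnerProductSpace ℝ V]

/-- The vector `cᵢ eᵢ + 2 ∑_{j > i} cⱼ eⱼ` against which `T eᵢ` is paired in the quadratic form of a
symmetric operator `T`; the factor `2` accounts for both the `(i, j)` and the `(j, i)` entry. -/
def doubledTail (e : ι → V) (c : ι → ℝ) (i : ι) : V :=
  c i • e i + (2 : ℝ) • ∑ j ∈ Finset.Ioi i, c j • e j

theorem inner_map_sum_smul_self_eq_sum_inner_doubledTail [Fintype ι] [LocallyFiniteOrderBot ι]
    {T : V →ₗ[ℝ] V} (hT : T.IsSymmetric) (e : ι → V) (c : ι → ℝ) :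
    ⟪T (∑ i, c i • e i), ∑ i, c i • e i⟫ = ∑ i, c i * ⟪T (e i), doubledTail e c i⟫ := by
  have symm_entries : ∀ i j, c i * (c j * ⟪T (e i), e j⟫) = c j * (c i * ⟪T (e j), e i⟫) := by
    intro i j
    rw [hT (e i) (e j), real_inner_comm, mul_left_comm]
  calc ⟪T (∑ i, c i • e i), ∑ i, c i • e i⟫
      = ∑ i, ∑ j, c i * (c j * ⟪T (e i), e j⟫) := by
        simp only [map_sum, map_smul, sum_inner, real_inner_smul_left]
        simp only [inner_sum, real_inner_smul_right, Finset.mul_sum]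
    _ = ∑ i, (c i * (c i * ⟪T (e i), e i⟫)
          + 2 • ∑ j ∈ Finset.Ioi i, c i * (c j * ⟪T (e i), e j⟫)) :=
        sum_sum_eq_sum_add_two_nsmul_sum_Ioi symm_entries
    _ = ∑ i, c i * ⟪T (e i), doubledTail e c i⟫ := by
        refine Finset.sum_congr rfl fun i _ => ?_
        rw [doubledTail, inner_add_right, real_inner_smul_right, real_inner_smul_right, inner_sum,
          ← Finset.mul_sum, nsmul_eq_mul, Nat.cast_ofNat]
        simp only [real_inner_smul_right]
        ring

theorem norm_doubledTail_sq {e : ι → V} (he : Orthonormal ℝ e) (c : ι → ℝ) (i : ι) :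
    ‖doubledTail e c i‖ ^ 2 = c i ^ 2 + 4 * ∑ j ∈ Finset.Ioi i, c j ^ 2 := by
  have tail_orthogonal : ⟪e i, ∑ j ∈ Finset.Ioi i, c j • e j⟫ = 0 := by
    rw [inner_sum]
    refine Finset.sum_eq_zero fun j hj => ?_
    rw [real_inner_smul_right, he.inner_eq_zero (Finset.mem_Ioi.mp hj).ne, mul_zero]
  have norm_tail : ‖∑ j ∈ Finset.Ioi i, c j • e j‖ ^ 2 = ∑ j ∈ Finset.Ioi i, c j ^ 2 := by
    rw [← real_inner_self_eq_norm_sq, he.inner_sum]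
    exact Finset.sum_congr rfl fun j _ => (sq (c j)).symm
  rw [doubledTail, norm_add_sq_real, real_inner_smul_left, real_inner_smul_right, tail_orthogonal,
    norm_smul, norm_smul, mul_pow, mul_pow, norm_tail, he.norm_eq_one, Real.norm_eq_abs,
    Real.norm_eq_abs, sq_abs, sq_abs]
  ring

/-- The constant `k` in `|cᵢ| ‖doubledTail e c i‖ ≤ k ∑_{j ≥ i} cⱼ²` for orthonormal `e`: it is `1`
at the top index, where the tail is empty, and `2 / √3` elsewhere. -/
noncomputable def tailConstant {ι : Type*} [DecidableEq ι] [Top ι] (i : ι) : ℝ :=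
  if i = ⊤ then 1 else 2 / √3

theorem tailConstant_nonneg {ι : Type*} [DecidableEq ι] [Top ι] (i : ι) : 0 ≤ tailConstant i := by
  unfold tailConstant
  split_ifs <;> positivity

theorem sum_tailConstant_mul {n : ℕ} (f : Fin (n + 1) → ℝ) :
    ∑ i, tailConstant i * f i = 2 / √3 * ∑ i : Fin n, f i.castSucc + f (Fin.last n) := by
  simp [tailConstant, Fin.sum_univ_castSucc, Fin.top_eq_last, Fin.castSucc_ne_last, Finset.mul_sum]

theorem abs_mul_norm_doubledTail_le [OrderTop ι] {e : ι → V} (he : Orthonormal ℝ e) (c : ι → ℝ)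
    (i : ι) :
    |c i| * ‖doubledTail e c i‖ ≤ tailConstant i * ∑ j ∈ Finset.Ici i, c j ^ 2 := by
  have sum_nonneg : 0 ≤ ∑ j ∈ Finset.Ici i, c j ^ 2 := Finset.sum_nonneg fun j _ => sq_nonneg _
  refine le_of_sq_le_sq ?_ (mul_nonneg (tailConstant_nonneg i) sum_nonneg)
  rw [mul_pow, sq_abs, norm_doubledTail_sq he, mul_pow, Finset.Ici_eq_cons_Ioi, Finset.sum_cons]
  by_cases hi : i = ⊤
  · rw [tailConstant, if_pos hi, hi, Finset.Ioi_top, Finset.sum_empty]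
    exact le_of_eq (by ring)
  · rw [tailConstant, if_neg hi, div_pow, Real.sq_sqrt zero_le_three]
    set Y := ∑ j ∈ Finset.Ioi i, c j ^ 2
    have gap_eq_sq : 2 ^ 2 / 3 * (c i ^ 2 + Y) ^ 2 - c i ^ 2 * (c i ^ 2 + 4 * Y)
        = (c i ^ 2 - 2 * Y) ^ 2 / 3 := by ring
    exact sub_nonneg.mp (gap_eq_sq ▸ by positivity)

end DoubledTail

theorem mul_sum_Ici_le_sum_mul {ι : Type*} [Fintype ι] [Preorder ι]
    [LocallyFiniteOrderTop ι] {lam w : ι → ℝ} (hmono : Monotone lam) (hlam : ∀ i, 0 ≤ lam i)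
    (hw : ∀ i, 0 ≤ w i) (i : ι) :
    lam i * ∑ j ∈ Finset.Ici i, w j ≤ ∑ j, lam j * w j :=
  calc lam i * ∑ j ∈ Finset.Ici i, w j
      = ∑ j ∈ Finset.Ici i, lam i * w j := Finset.mul_sum ..
    _ ≤ ∑ j ∈ Finset.Ici i, lam j * w j := Finset.sum_le_sum fun j hj =>
        mul_le_mul_of_nonneg_right (hmono (Finset.mem_Ici.mp hj)) (hw j)
    _ ≤ ∑ j, lam j * w j := Finset.sum_le_univ_sum_of_nonneg fun j => mul_nonneg (hlam j) (hw j)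

section RelativeBound

variable {ι V : Type*} [Fintype ι] [NormedAddCommGroup V] [InnerProductSpace ℝ V]

theorem inner_map_self_eq_sum_of_eigenbasis (b : OrthonormalBasis ι ℝ V) {S : V →ₗ[ℝ] V}
    {lam : ι → ℝ} (hS : ∀ i, S (b i) = lam i • b i) (v : V) :
    ⟪S v, v⟫ = ∑ i, lam i * b.repr v i ^ 2 := by
  have map_eq : S v = ∑ i, (b.repr v i * lam i) • b i := by
    conv_lhs => rw [← b.sum_repr v]
    simp only [map_sum, map_smul, hS, smul_smul]
  rw [map_eq, sum_inner]
  refine Finset.sum_congr rfl fun i _ => ?_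
  rw [real_inner_smul_left, ← b.repr_apply_apply]
  ring

variable [LinearOrder ι] [LocallyFiniteOrderTop ι] [LocallyFiniteOrderBot ι] [OrderTop ι]

theorem abs_inner_map_self_le_of_eigenbasis (b : OrthonormalBasis ι ℝ V) {S T : V →ₗ[ℝ] V}
    {lam η : ι → ℝ} (hS : ∀ i, S (b i) = lam i • b i) (hlam : ∀ i, 0 < lam i)
    (hmono : Monotone lam) (hT : T.IsSymmetric) (hη : ∀ i, ‖T (b i)‖ ≤ η i) (v : V) :
    |⟪T v, v⟫| ≤ (∑ i, tailConstant i * (η i / lam i)) * ⟪S v, v⟫ := by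
  let c : ι → ℝ := fun i => b.repr v i
  have expand : ⟪T v, v⟫ = ∑ i, c i * ⟪T (b i), doubledTail b c i⟫ := by
    rw [← inner_map_sum_smul_self_eq_sum_inner_doubledTail hT, b.sum_repr]
  have η_nonneg : ∀ i, 0 ≤ η i := fun i => (norm_nonneg _).trans (hη i)
  have term_le : ∀ i, |c i * ⟪T (b i), doubledTail b c i⟫|
      ≤ tailConstant i * (η i / lam i) * ⟪S v, v⟫ := by
    intro i
    calc |c i * ⟪T (b i), doubledTail b c i⟫|
        ≤ |c i| * (η i * ‖doubledTail b c i‖) := by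
          rw [abs_mul]
          gcongr
          exact (abs_real_inner_le_norm _ _).trans (by gcongr; exact hη i)
      _ = η i * (|c i| * ‖doubledTail b c i‖) := mul_left_comm ..
      _ ≤ η i * (tailConstant i * ∑ j ∈ Finset.Ici i, c j ^ 2) :=
          mul_le_mul_of_nonneg_left (abs_mul_norm_doubledTail_le b.orthonormal c i) (η_nonneg i)
      _ = tailConstant i * (η i / lam i) * (lam i * ∑ j ∈ Finset.Ici i, c j ^ 2) := by
          field_simp [(hlam i).ne']
      _ ≤ tailConstant i * (η i / lam i) * ⟪S v, v⟫ := by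
          rw [inner_map_self_eq_sum_of_eigenbasis b hS]
          exact mul_le_mul_of_nonneg_left
            (mul_sum_Ici_le_sum_mul hmono (fun j => (hlam j).le) (fun j => sq_nonneg _) i)
            (mul_nonneg (tailConstant_nonneg i) (div_nonneg (η_nonneg i) (hlam i).le))
  rw [expand, Finset.sum_mul]
  exact (Finset.abs_sum_le_sum_abs _ _).trans (Finset.sum_le_sum fun i _ => term_le i)

end RelativeBound

section EuclideanMatrix

variable {ι : Type*} [Fintype ι]

theorem enorm_eq_norm_toLp {n : ℕ} (v : Fin n → ℝ) : _root_.enorm v = ‖WithLp.toLp 2 v‖ := by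
  simp only [_root_.enorm, EuclideanSpace.norm_eq, Real.norm_eq_abs, sq_abs]

theorem inner_toEuclideanLin_toLp_self [DecidableEq ι] (M : Matrix ι ι ℝ) (v : ι → ℝ) :
    ⟪M.toEuclideanLin (WithLp.toLp 2 v), WithLp.toLp 2 v⟫ = v ⬝ᵥ M *ᵥ v := by
  rw [toLpLin_toLp, toLin'_apply, EuclideanSpace.inner_toLp_toLp, star_trivial]

theorem exists_orthonormalBasis_eq_toLp [DecidableEq ι] {e : ι → ι → ℝ}
    (hortho : ∀ i j, e i ⬝ᵥ e j = if i = j then (1 : ℝ) else 0) :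
    ∃ b : OrthonormalBasis ι ℝ (EuclideanSpace ℝ ι), ∀ i, b i = WithLp.toLp 2 (e i) := by
  have orthonormal : Orthonormal ℝ fun i => WithLp.toLp 2 (e i) := by
    rw [orthonormal_iff_ite]
    intro i j
    rw [EuclideanSpace.inner_toLp_toLp, star_trivial, dotProduct_comm, hortho]
  have spans := orthonormal.linearIndependent.span_eq_top_of_card_eq_finrank'
    finrank_euclideanSpace.symm
  exact ⟨OrthonormalBasis.mk orthonormal spans.ge, congrFun (OrthonormalBasis.coe_mk _ _)⟩

theorem abs_dotProduct_mulVec_le_of_eigenbasis [LinearOrder ι] [LocallyFiniteOrderTop ι]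
    [LocallyFiniteOrderBot ι] [OrderTop ι] {A E : Matrix ι ι ℝ} {e : ι → ι → ℝ} {lam η : ι → ℝ}
    (heig : ∀ i, A *ᵥ e i = lam i • e i)
    (hortho : ∀ i j, e i ⬝ᵥ e j = if i = j then (1 : ℝ) else 0) (hlam : ∀ i, 0 < lam i)
    (hmono : Monotone lam) (hE : E.IsSymm) (hη : ∀ i, ‖WithLp.toLp 2 (E *ᵥ e i)‖ ≤ η i)
    (v : ι → ℝ) :
    |v ⬝ᵥ E *ᵥ v| ≤ (∑ i, tailConstant i * (η i / lam i)) * (v ⬝ᵥ A *ᵥ v) := by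
  obtain ⟨b, hb⟩ := exists_orthonormalBasis_eq_toLp hortho
  rw [← inner_toEuclideanLin_toLp_self, ← inner_toEuclideanLin_toLp_self]
  refine abs_inner_map_self_le_of_eigenbasis b (fun i => ?_) hlam hmono
    (isSymmetric_toEuclideanLin_iff.mpr (isHermitian_iff_isSymm.mpr hE))
    (fun i => ?_) _
  · rw [hb, toLpLin_toLp, toLin'_apply, heig, WithLp.toLp_smul]
  · rw [hb, toLpLin_toLp, toLin'_apply]
    exact hη i

end EuclideanMatrix

section SpectralEquivalence

variable {ι : Type*} [Fintype ι] {A B : Matrix ι ι ℝ}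

theorem pos_of_eigenvector_of_dotProduct_mulVec_pos {v : ι → ℝ} {μ : ℝ}
    (hpos : 0 < v ⬝ᵥ A *ᵥ v) (hv : A *ᵥ v = μ • v) : 0 < μ := by
  rw [hv, dotProduct_smul, smul_eq_mul] at hpos
  exact pos_of_mul_pos_left hpos (Finset.sum_nonneg fun i _ => mul_self_nonneg (v i))

variable [DecidableEq ι]

theorem isUnit_det_of_forall_dotProduct_mulVec_pos (hB : ∀ v, v ≠ 0 → 0 < v ⬝ᵥ B *ᵥ v) :
    IsUnit B.det := by
  rw [isUnit_iff_ne_zero]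
  intro hdet
  obtain ⟨v, hv, hker⟩ := exists_mulVec_eq_zero_iff.mpr hdet
  exact (hB v hv).ne' (by rw [hker, dotProduct_zero])

theorem mulVec_eq_smul_mulVec_of_inv_mul_mulVec_eq_smul (hB : IsUnit B.det) {ρ : ℝ} {v : ι → ℝ}
    (hv : (B⁻¹ * A) *ᵥ v = ρ • v) : A *ᵥ v = ρ • B *ᵥ v := by
  rw [← mulVec_smul, ← hv, mulVec_mulVec, mul_nonsing_inv_cancel_left B A hB]

variable {l u : ℝ}

theorem eigenvalue_inv_mul_mem_Icc (hA : A.PosDef) (hl : 0 < l)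
    (hAB : ∀ v, l * (v ⬝ᵥ A *ᵥ v) ≤ v ⬝ᵥ B *ᵥ v ∧ v ⬝ᵥ B *ᵥ v ≤ u * (v ⬝ᵥ A *ᵥ v))
    {ρ : ℝ} {v : ι → ℝ} (hv : v ≠ 0) (hρ : (B⁻¹ * A) *ᵥ v = ρ • v) :
    ρ ∈ Set.Icc (1 / u) (1 / l) := by
  have A_pos : ∀ w, w ≠ 0 → 0 < w ⬝ᵥ A *ᵥ w := fun w hw => hA.dotProduct_mulVec_pos hw
  have B_pos : ∀ w, w ≠ 0 → 0 < w ⬝ᵥ B *ᵥ w := fun w hw =>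
    (mul_pos hl (A_pos w hw)).trans_le (hAB w).1
  have rayleigh : ρ = (v ⬝ᵥ A *ᵥ v) / (v ⬝ᵥ B *ᵥ v) := by
    rw [eq_div_iff (B_pos v hv).ne', mulVec_eq_smul_mulVec_of_inv_mul_mulVec_eq_smul
      (isUnit_det_of_forall_dotProduct_mulVec_pos B_pos) hρ, dotProduct_smul, smul_eq_mul]
  have u_pos : 0 < u := pos_of_mul_pos_left ((B_pos v hv).trans_le (hAB v).2) (A_pos v hv).le
  rw [rayleigh]
  constructor
  · rw [div_le_div_iff₀ u_pos (B_pos v hv)]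
    linarith [(hAB v).2]
  · rw [div_le_div_iff₀ (B_pos v hv) hl]
    linarith [(hAB v).1]

theorem eigenvalue_inv_mul_div_le (hA : A.PosDef) (hl : 0 < l)
    (hAB : ∀ v, l * (v ⬝ᵥ A *ᵥ v) ≤ v ⬝ᵥ B *ᵥ v ∧ v ⬝ᵥ B *ᵥ v ≤ u * (v ⬝ᵥ A *ᵥ v))
    {ρ₁ ρ₂ : ℝ} {v₁ v₂ : ι → ℝ} (hv₁ : v₁ ≠ 0) (hv₂ : v₂ ≠ 0)
    (hρ₁ : (B⁻¹ * A) *ᵥ v₁ = ρ₁ • v₁) (hρ₂ : (B⁻¹ * A) *ᵥ v₂ = ρ₂ • v₂) :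
    ρ₁ / ρ₂ ≤ u / l := by
  have l_le_u : l ≤ u :=
    le_of_mul_le_mul_right ((hAB v₁).1.trans (hAB v₁).2) (hA.dotProduct_mulVec_pos hv₁)
  have u_pos : 0 < u := hl.trans_le l_le_u
  calc ρ₁ / ρ₂ ≤ (1 / l) / (1 / u) :=
        div_le_div₀ (by positivity) (eigenvalue_inv_mul_mem_Icc hA hl hAB hv₁ hρ₁).2
          (by positivity) (eigenvalue_inv_mul_mem_Icc hA hl hAB hv₂ hρ₂).1
    _ = u / l := by rw [one_div, one_div, div_inv_eq_mul, inv_mul_eq_div]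

end SpectralEquivalence

/-- Per-eigenvector accuracies.  Let `A` be SPD of size `n+1` with
orthonormal eigenbasis `e₀,…,e_n` and sorted eigenvalues `λ₀ ≤ … ≤ λ_n = λ_max`.
If the symmetric matrix `A_H` satisfies `‖(A − A_H)eᵢ‖ ≤ εᵢ·λ_max` for each `i`
and `δ := (2/√3)·∑_{i<n} εᵢ·λ_max/λᵢ + ε_n·λ_max/λ_n < 1`, then
`(1 − δ)·vᵀAv ≤ vᵀA_Hv ≤ (1 + δ)·vᵀAv` for every `v`; consequently every
eigenvalue `ρ` of `A_H⁻¹A` satisfies `1/(1+δ) ≤ ρ ≤ 1/(1−δ)` and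
`κ(A_H⁻¹A) ≤ (1+δ)/(1−δ)`. -/
theorem preconditioner_per_eigenvector_accuracy {n : ℕ}
    (A AH : Matrix (Fin (n + 1)) (Fin (n + 1)) ℝ)
    (hA : A.PosDef) (hAH : AH.IsSymm)
    (e : Fin (n + 1) → Fin (n + 1) → ℝ) (lam : Fin (n + 1) → ℝ)
    (heig : ∀ i, A.mulVec (e i) = lam i • e i)
    (hortho : ∀ i j, e i ⬝ᵥ e j = if i = j then (1 : ℝ) else 0)
    (hsort : ∀ i j : Fin (n + 1), i ≤ j → lam i ≤ lam j)
    (ε : Fin (n + 1) → ℝ) (hε : ∀ i, 0 ≤ ε i)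
    (happrox : ∀ i, _root_.enorm ((A - AH).mulVec (e i)) ≤ ε i * lam (Fin.last n))
    (δ : ℝ)
    (hδ : δ = 2 / Real.sqrt 3
            * ∑ i : Fin n, ε i.castSucc * lam (Fin.last n) / lam i.castSucc
            + ε (Fin.last n) * lam (Fin.last n) / lam (Fin.last n))
    (hδ1 : δ < 1) :
    (∀ v : Fin (n + 1) → ℝ,
        (1 - δ) * (v ⬝ᵥ A.mulVec v) ≤ v ⬝ᵥ AH.mulVec v ∧
        v ⬝ᵥ AH.mulVec v ≤ (1 + δ) * (v ⬝ᵥ A.mulVec v)) ∧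
    (∀ (ρ : ℝ) (v : Fin (n + 1) → ℝ), v ≠ 0 → (AH⁻¹ * A).mulVec v = ρ • v →
        1 / (1 + δ) ≤ ρ ∧ ρ ≤ 1 / (1 - δ)) ∧
    (∀ (ρ₁ ρ₂ : ℝ) (v₁ v₂ : Fin (n + 1) → ℝ), v₁ ≠ 0 → v₂ ≠ 0 →
        (AH⁻¹ * A).mulVec v₁ = ρ₁ • v₁ → (AH⁻¹ * A).mulVec v₂ = ρ₂ • v₂ →
        ρ₁ / ρ₂ ≤ (1 + δ) / (1 - δ)) := by
  have lam_pos (i : Fin (n + 1)) : 0 < lam i := by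
    have e_ne_zero : e i ≠ 0 := fun h => by simpa [h] using hortho i i
    exact pos_of_eigenvector_of_dotProduct_mulVec_pos (hA.dotProduct_mulVec_pos e_ne_zero) (heig i)
  have error_symm : (A - AH).IsSymm :=
    (isHermitian_iff_isSymm.mp hA.isHermitian).sub hAH
  have error_bound (v : Fin (n + 1) → ℝ) : |v ⬝ᵥ (A - AH) *ᵥ v| ≤ δ * (v ⬝ᵥ A *ᵥ v) := by
    rw [hδ, ← sum_tailConstant_mul fun i => ε i * lam (Fin.last n) / lam i]
    exact abs_dotProduct_mulVec_le_of_eigenbasis heig hortho lam_pos (fun i j => hsort i j)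
      error_symm (fun i => enorm_eq_norm_toLp _ ▸ happrox i) v
  have form_bounds (v : Fin (n + 1) → ℝ) :
      (1 - δ) * (v ⬝ᵥ A *ᵥ v) ≤ v ⬝ᵥ AH *ᵥ v ∧ v ⬝ᵥ AH *ᵥ v ≤ (1 + δ) * (v ⬝ᵥ A *ᵥ v) := by
    have abs_bound := abs_le.mp (error_bound v)
    rw [sub_mulVec, dotProduct_sub] at abs_bound
    constructor <;> linarith
  have one_sub_pos : 0 < 1 - δ := sub_pos.mpr hδ1
  exact ⟨form_bounds, fun _ _ => eigenvalue_inv_mul_mem_Icc hA one_sub_pos form_bounds,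
    fun _ _ _ _ => eigenvalue_inv_mul_div_le hA one_sub_pos form_bounds⟩
end

section
/- Let B be a real matrix and let U₁ˢ, U₁ʷ be real matrices with orthonormal columns (of conformal sizes); set P_s := U₁ˢ(U₁ˢ)ᵀ and P_w := U₁ʷ(U₁ʷ)ᵀ, and define the intermediate approximation B̂ᵀ := P_s Bᵀ P_w. Let X_s and X_w be real matrices, and assume ‖(I − P_s)[X_s, BᵀX_w]‖ ≤ ε₁‖[X_s, BᵀX_w]‖ and ‖(I − P_w)[X_w, BX_s]‖ ≤ ε₁‖[X_w, BX_s]‖, where ε₁ ≥ 0. Then ‖(Bᵀ − B̂ᵀ)X_w‖ ≤ ε₁·(‖[X_s, BᵀX_w]‖ + ‖Bᵀ‖·‖[X_w, BX_s]‖) and ‖(B − B̂)X_s‖ ≤ ε₁·(‖Bᵀ‖·‖[X_s, BᵀX_w]‖ + ‖[X_w, BX_s]‖). -/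
open Matrix

/-- Spectral (ℓ²-operator) norm of a real matrix. -/
noncomputable def specNorm {m n : Type*} [Fintype m] [Fintype n] [DecidableEq n]
    (M : Matrix m n ℝ) : ℝ :=
  ‖LinearMap.toContinuousLinearMap (Matrix.toEuclideanLin M)‖

/-!
Write `P`, `Q` for the two projections. The error of the two-sided compression splits as
`C - P C Q = (1 - P) C + P C (1 - Q)`. Applied to `X`, the first term is `1 - P` acting on the
block `C X` and the second is controlled by `1 - Q` acting on the block `X`, because `P` is a
contraction. Both blocks are among the columns on which `1 - P` and `1 - Q` are assumed small.
Since `P` and `Q` are Hermitian, the second bound is the first one with the roles of `C`, `P`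
and `Cᴴ`, `Q` exchanged.
-/

section L2OpNorm

open scoped Matrix.Norms.L2Operator

variable {𝕜 l m n n₁ n₂ : Type*} [RCLike 𝕜] [Fintype l] [Fintype m] [Fintype n]
  [Fintype n₁] [Fintype n₂] [DecidableEq l] [DecidableEq n] [DecidableEq n₁] [DecidableEq n₂]

theorem specNorm_eq_l2_opNorm (M : Matrix m n ℝ) : specNorm M = ‖M‖ :=
  rfl

theorem l2_opNorm_one_le : ‖(1 : Matrix n n 𝕜)‖ ≤ 1 := by
  rw [cstar_norm_def, map_one]
  exact ContinuousLinearMap.norm_id_le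

theorem l2_opNorm_le_one_of_conjTranspose_mul_self_eq_one {V : Matrix m n 𝕜} (hV : Vᴴ * V = 1) :
    ‖V‖ ≤ 1 := by
  rw [← sq_le_one_iff₀ (norm_nonneg V), sq, ← l2_opNorm_conjTranspose_mul_self, hV]
  exact l2_opNorm_one_le

theorem l2_opNorm_mul_conjTranspose_le_one [DecidableEq m] {V : Matrix m n 𝕜}
    (hV : Vᴴ * V = 1) : ‖V * Vᴴ‖ ≤ 1 := by
  have hV_norm := l2_opNorm_le_one_of_conjTranspose_mul_self_eq_one hV
  refine (l2_opNorm_mul V Vᴴ).trans (mul_le_one₀ hV_norm (norm_nonneg _) ?_)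
  rwa [l2_opNorm_conjTranspose]

theorem l2_opNorm_submatrix_id_le (M : Matrix m n 𝕜) {f : l → n} (hf : Function.Injective f) :
    ‖M.submatrix id f‖ ≤ ‖M‖ := by
  let S : Matrix n l 𝕜 := (1 : Matrix n n 𝕜).submatrix id f
  have hS : Sᴴ * S = 1 := by
    rw [conjTranspose_submatrix, conjTranspose_one,
      ← submatrix_mul _ _ _ _ _ Function.bijective_id, Matrix.one_mul, submatrix_one f hf]
  have hMS : M.submatrix id f = M * S := by
    conv_lhs => rw [← Matrix.mul_one M]
    exact submatrix_mul _ _ _ _ _ Function.bijective_id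
  rw [hMS]
  exact (l2_opNorm_mul M S).trans <|
    mul_le_of_le_one_right (norm_nonneg M) (l2_opNorm_le_one_of_conjTranspose_mul_self_eq_one hS)

theorem l2_opNorm_le_l2_opNorm_fromCols_left (X : Matrix m n₁ 𝕜) (Y : Matrix m n₂ 𝕜) :
    ‖X‖ ≤ ‖fromCols X Y‖ := by
  have hX : (fromCols X Y).submatrix id Sum.inl = X := rfl
  simpa only [hX] using l2_opNorm_submatrix_id_le (fromCols X Y) Sum.inl_injective

theorem l2_opNorm_le_l2_opNorm_fromCols_right (X : Matrix m n₁ 𝕜) (Y : Matrix m n₂ 𝕜) :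
    ‖Y‖ ≤ ‖fromCols X Y‖ := by
  have hY : (fromCols X Y).submatrix id Sum.inr = Y := rfl
  simpa only [hY] using l2_opNorm_submatrix_id_le (fromCols X Y) Sum.inr_injective

theorem l2_opNorm_sub_compression_mul_le [DecidableEq m] (C : Matrix m n 𝕜) {P : Matrix m m 𝕜}
    (Q : Matrix n n 𝕜) (X : Matrix n l 𝕜) (hP : ‖P‖ ≤ 1) :
    ‖(C - P * C * Q) * X‖ ≤ ‖(1 - P) * (C * X)‖ + ‖C‖ * ‖(1 - Q) * X‖ := by
  have error_split :
      (C - P * C * Q) * X = (1 - P) * (C * X) + P * (C * ((1 - Q) * X)) := by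
    simp only [Matrix.sub_mul, Matrix.mul_sub, Matrix.one_mul, Matrix.mul_assoc]
    abel
  calc ‖(C - P * C * Q) * X‖
      ≤ ‖(1 - P) * (C * X)‖ + ‖P * (C * ((1 - Q) * X))‖ := error_split ▸ norm_add_le _ _
    _ ≤ ‖(1 - P) * (C * X)‖ + ‖P‖ * ‖C * ((1 - Q) * X)‖ := by
        gcongr; exact l2_opNorm_mul _ _
    _ ≤ ‖(1 - P) * (C * X)‖ + ‖C * ((1 - Q) * X)‖ := by
        gcongr; exact mul_le_of_le_one_left (norm_nonneg _) hP
    _ ≤ ‖(1 - P) * (C * X)‖ + ‖C‖ * ‖(1 - Q) * X‖ := by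
        gcongr; exact l2_opNorm_mul _ _

theorem l2_opNorm_sub_compression_mul_le_of_fromCols [DecidableEq m] (C : Matrix m n 𝕜)
    {P : Matrix m m 𝕜} {Q : Matrix n n 𝕜} (hP : ‖P‖ ≤ 1)
    (X : Matrix n n₁ 𝕜) (Y : Matrix m n₂ 𝕜) (Z : Matrix n n₂ 𝕜) :
    ‖(C - P * C * Q) * X‖ ≤
      ‖(1 - P) * fromCols Y (C * X)‖ + ‖C‖ * ‖(1 - Q) * fromCols X Z‖ := by
  rw [mul_fromCols, mul_fromCols]
  refine (l2_opNorm_sub_compression_mul_le C Q X hP).trans ?_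
  gcongr
  · exact l2_opNorm_le_l2_opNorm_fromCols_right _ _
  · exact l2_opNorm_le_l2_opNorm_fromCols_left _ _

theorem first_order_symmetric_projection_general [DecidableEq m] (B : Matrix m n 𝕜)
    {P : Matrix n n 𝕜} {Q : Matrix m m 𝕜} (hP : P.IsHermitian) (hQ : Q.IsHermitian)
    (hP_norm : ‖P‖ ≤ 1) (hQ_norm : ‖Q‖ ≤ 1) (X : Matrix n n₁ 𝕜) (Y : Matrix m n₂ 𝕜) {ε : ℝ}
    (hPX : ‖(1 - P) * fromCols X (Bᴴ * Y)‖ ≤ ε * ‖fromCols X (Bᴴ * Y)‖)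
    (hQY : ‖(1 - Q) * fromCols Y (B * X)‖ ≤ ε * ‖fromCols Y (B * X)‖) :
    ‖(Bᴴ - P * Bᴴ * Q) * Y‖ ≤
      ε * (‖fromCols X (Bᴴ * Y)‖ + ‖B‖ * ‖fromCols Y (B * X)‖) ∧
    ‖(B - (P * Bᴴ * Q)ᴴ) * X‖ ≤
      ε * (‖B‖ * ‖fromCols X (Bᴴ * Y)‖ + ‖fromCols Y (B * X)‖) := by
  have compression_conjTranspose : (P * Bᴴ * Q)ᴴ = Q * B * P := by
    rw [conjTranspose_mul, conjTranspose_mul, conjTranspose_conjTranspose, hP.eq, hQ.eq,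
      Matrix.mul_assoc]
  constructor
  · calc ‖(Bᴴ - P * Bᴴ * Q) * Y‖
        ≤ ‖(1 - P) * fromCols X (Bᴴ * Y)‖ + ‖Bᴴ‖ * ‖(1 - Q) * fromCols Y (B * X)‖ :=
          l2_opNorm_sub_compression_mul_le_of_fromCols Bᴴ hP_norm Y X (B * X)
      _ ≤ ε * ‖fromCols X (Bᴴ * Y)‖ + ‖B‖ * (ε * ‖fromCols Y (B * X)‖) := by
          rw [l2_opNorm_conjTranspose]
          gcongr
      _ = ε * (‖fromCols X (Bᴴ * Y)‖ + ‖B‖ * ‖fromCols Y (B * X)‖) := by ring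
  · calc ‖(B - (P * Bᴴ * Q)ᴴ) * X‖
        ≤ ‖(1 - Q) * fromCols Y (B * X)‖ + ‖B‖ * ‖(1 - P) * fromCols X (Bᴴ * Y)‖ := by
          rw [compression_conjTranspose]
          exact l2_opNorm_sub_compression_mul_le_of_fromCols B hQ_norm X Y (Bᴴ * Y)
      _ ≤ ε * ‖fromCols Y (B * X)‖ + ‖B‖ * (ε * ‖fromCols X (Bᴴ * Y)‖) := by gcongr
      _ = ε * (‖B‖ * ‖fromCols X (Bᴴ * Y)‖ + ‖fromCols Y (B * X)‖) := by ring

end L2OpNorm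

/-- First-order symmetric projection.  With orthonormal-column
matrices `U₁ˢ, U₁ʷ`, projections `P_s := U₁ˢ(U₁ˢ)ᵀ`, `P_w := U₁ʷ(U₁ʷ)ᵀ`,
intermediate approximation `B̂ᵀ := P_s Bᵀ P_w`, and hypotheses
`‖(I − P_s)[X_s, BᵀX_w]‖ ≤ ε₁‖[X_s, BᵀX_w]‖` and
`‖(I − P_w)[X_w, BX_s]‖ ≤ ε₁‖[X_w, BX_s]‖`, one has
`‖(Bᵀ − B̂ᵀ)X_w‖ ≤ ε₁(‖[X_s, BᵀX_w]‖ + ‖Bᵀ‖‖[X_w, BX_s]‖)` and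
`‖(B − B̂)X_s‖ ≤ ε₁(‖Bᵀ‖‖[X_s, BᵀX_w]‖ + ‖[X_w, BX_s]‖)`. -/
theorem first_order_symmetric_projection {w s p₁ p₂ a b : ℕ}
    (B : Matrix (Fin w) (Fin s) ℝ)
    (U₁s : Matrix (Fin s) (Fin p₁) ℝ) (U₁w : Matrix (Fin w) (Fin p₂) ℝ)
    (hU₁s : U₁sᵀ * U₁s = 1) (hU₁w : U₁wᵀ * U₁w = 1)
    (Xs : Matrix (Fin s) (Fin a) ℝ) (Xw : Matrix (Fin w) (Fin b) ℝ)
    (ε₁ : ℝ) (hε₁ : 0 ≤ ε₁)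
    (Bhat : Matrix (Fin s) (Fin w) ℝ)
    (hBhat : Bhat = U₁s * U₁sᵀ * Bᵀ * (U₁w * U₁wᵀ))
    (Ys : Matrix (Fin s) (Fin a ⊕ Fin b) ℝ)
    (hYs : Ys = Matrix.fromCols Xs (Bᵀ * Xw))
    (Yw : Matrix (Fin w) (Fin b ⊕ Fin a) ℝ)
    (hYw : Yw = Matrix.fromCols Xw (B * Xs))
    (hs : specNorm ((1 - U₁s * U₁sᵀ) * Ys) ≤ ε₁ * specNorm Ys)
    (hw : specNorm ((1 - U₁w * U₁wᵀ) * Yw) ≤ ε₁ * specNorm Yw) :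
    specNorm ((Bᵀ - Bhat) * Xw)
      ≤ ε₁ * (specNorm Ys + specNorm Bᵀ * specNorm Yw) ∧
    specNorm ((B - Bhatᵀ) * Xs)
      ≤ ε₁ * (specNorm Bᵀ * specNorm Ys + specNorm Yw) := by
  subst hBhat hYs hYw
  simp only [specNorm_eq_l2_opNorm, ← conjTranspose_eq_transpose_of_trivial,
    l2_opNorm_conjTranspose] at hU₁s hU₁w hs hw ⊢
  exact first_order_symmetric_projection_general B
    (isHermitian_mul_conjTranspose_self U₁s) (isHermitian_mul_conjTranspose_self U₁w)
    (l2_opNorm_mul_conjTranspose_le_one hU₁s) (l2_opNorm_mul_conjTranspose_le_one hU₁w)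
    Xs Xw hs hw
end
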